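/- arXiv:1302.0084 — 4 statements merged into one kernel-verified Lean document; each statement's English description precedes it below -/
import Mathlib

section
/- Let A, P > 0 and r > 1/(√(1+P) − 1). Let X be a real random variable with |X| ≤ A almost surely, let Z ~ N(0,1) be independent of X, and let P_Y be the law of Y = X + Z. Then the total variation distance satisfies TV(P_Y, N(0, 1+P)) ≥ 2 Q(r A) − 2 Q( A (r√(1+P) − 1) ), where TV(P,Q) = sup_E |P(E) − Q(E)| over Borel sets E. -/
open MeasureTheory ProbabilityTheory

/-- The standard normal tail function `Q(x) = ∫_x^∞ e^{-y²/2}/√(2π) dy`. -/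
noncomputable def gaussQ (x : ℝ) : ℝ :=
  ∫ y in Set.Ioi x, Real.exp (-(y ^ 2) / 2) / Real.sqrt (2 * Real.pi)

/-- Total variation distance between two measures: `sup_E |μ(E) - ν(E)|` over Borel sets. -/
noncomputable def tvDist {α : Type*} [MeasurableSpace α] (μ ν : Measure α) : ℝ :=
  ⨆ E : {s : Set α // MeasurableSet s}, |(μ E).toReal - (ν E).toReal|

lemma std_Ioi (t : ℝ) : (gaussianReal 0 1).real (Set.Ioi t) = gaussQ t := by
  rw [measureReal_def, gaussianReal_apply_eq_integral _ one_ne_zero, ENNReal.toReal_ofReal]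
  · unfold gaussQ
    refine integral_congr_ae (Filter.Eventually.of_forall fun y => ?_)
    simp [gaussianPDFReal, div_eq_inv_mul]
  · exact integral_nonneg fun y => gaussianPDFReal_nonneg _ _ _

lemma std_abs (t : ℝ) (ht : 0 ≤ t) :
    (gaussianReal 0 1).real {x | t < |x|} = 2 * gaussQ t := by
  have h1 : {x : ℝ | t < |x|} = Set.Ioi t ∪ Set.Iio (-t) := by
    ext x
    simp only [Set.mem_ofPred_eq, Set.mem_union, Set.mem_Ioi, Set.mem_Iio, lt_abs]
    constructor <;> (rintro (h | h) <;> [left; right] <;> linarith)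
  have h2 : (gaussianReal 0 1).real (Set.Iio (-t)) = gaussQ t := by
    have h := gaussianReal_map_neg (μ := 0) (v := 1)
    rw [neg_zero] at h
    rw [← h, map_measureReal_apply measurable_neg measurableSet_Iio, ← std_Ioi]
    congr 1
    ext x
    simp
  rw [h1, measureReal_union _ measurableSet_Iio, h2, std_Ioi]
  · ring
  · rw [Set.disjoint_left]
    intro x hx hx'
    simp only [Set.mem_Ioi, Set.mem_Iio] at hx hx'
    linarith

lemma abs_meas (t : ℝ) : MeasurableSet {x : ℝ | t < |x|} :=
  measurableSet_lt measurable_const (by fun_prop)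

/-- Let `A, P > 0` and `r > 1/(√(1+P)-1)`, let `X` be a real random variable
with `|X| ≤ A` a.s. and `Z ~ N(0,1)` independent of `X`. Then the law `P_Y` of `Y = X + Z`
satisfies `TV(P_Y, N(0,1+P)) ≥ 2Q(rA) - 2Q(A(r√(1+P)-1))`. -/
theorem output_tv_lower_bound
    {Ω : Type*} [MeasureSpace Ω] [IsProbabilityMeasure (ℙ : Measure Ω)]
    (A P r : ℝ) (hA : 0 < A) (hP : 0 < P)
    (hr : 1 / (Real.sqrt (1 + P) - 1) < r)
    (X Z : Ω → ℝ) (hX : Measurable X) (hZ : Measurable Z)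
    (hindep : IndepFun X Z ℙ)
    (hZlaw : Measure.map Z ℙ = gaussianReal 0 1)
    (hXA : ∀ᵐ ω ∂ℙ, |X ω| ≤ A) :
    2 * gaussQ (r * A) - 2 * gaussQ (A * (r * Real.sqrt (1 + P) - 1)) ≤
      tvDist (Measure.map (fun ω => X ω + Z ω) ℙ) (gaussianReal 0 (1 + P).toNNReal) := by
  set s := Real.sqrt (1 + P) with hs
  have hs1 : 1 < s := by
    rw [hs, Real.lt_sqrt (by norm_num)]; linarith
  have hr0 : 0 < r := lt_trans (by have := sub_pos.2 hs1; positivity) hr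
  have hrs : 0 ≤ r * s - 1 := by
    rw [div_lt_iff₀ (by linarith)] at hr
    nlinarith
  have hmY : Measurable (fun ω => X ω + Z ω) := hX.add hZ
  have hN : (gaussianReal 0 (1 + P).toNNReal).real {x | A * r * s < |x|}
      = 2 * gaussQ (r * A) := by
    have h := gaussianReal_map_const_mul (μ := 0) (v := 1) s
    have h' : NNReal.mk (s ^ 2) (sq_nonneg s) * 1 = (1 + P).toNNReal := by
      ext
      rw [mul_one, Real.coe_toNNReal _ (by linarith)]
      exact Real.sq_sqrt (by linarith)
    rw [mul_zero, h'] at h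
    rw [← h, map_measureReal_apply (by fun_prop) (abs_meas _), ← std_abs _ (by positivity)]
    congr 1
    ext x
    simp only [Set.mem_preimage, Set.mem_ofPred_eq, abs_mul, abs_of_pos (zero_lt_one.trans hs1)]
    constructor <;> intro h <;> nlinarith
  have hY : (Measure.map (fun ω => X ω + Z ω) ℙ).real {x | A * r * s < |x|}
      ≤ 2 * gaussQ (A * (r * s - 1)) := by
    rw [← std_abs _ (by positivity), ← hZlaw, map_measureReal_apply hmY (abs_meas _),
      map_measureReal_apply hZ (abs_meas _)]
    refine ENNReal.toReal_mono (measure_ne_top _ _) (measure_mono_ae ?_)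
    filter_upwards [hXA] with ω hω h
    have h1 : A * r * s < |X ω + Z ω| := h
    have h2 := abs_add_le (X ω) (Z ω)
    show A * (r * s - 1) < |Z ω|
    linarith
  have : IsProbabilityMeasure (Measure.map (fun ω => X ω + Z ω) ℙ) :=
    Measure.isProbabilityMeasure_map hmY.aemeasurable
  have hb : BddAbove (Set.range fun E : {s : Set ℝ // MeasurableSet s} =>
      |((Measure.map (fun ω => X ω + Z ω) ℙ) E).toReal
        - ((gaussianReal 0 (1 + P).toNNReal) E).toReal|) := by
    refine ⟨1, ?_⟩
    rintro _ ⟨E, rfl⟩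
    have a1 := measureReal_le_one (μ := Measure.map (fun ω => X ω + Z ω) ℙ) (s := E.1)
    have a2 := measureReal_le_one (μ := gaussianReal 0 (1 + P).toNNReal) (s := E.1)
    have a3 := measureReal_nonneg (μ := Measure.map (fun ω => X ω + Z ω) ℙ) (s := E.1)
    have a4 := measureReal_nonneg (μ := gaussianReal 0 (1 + P).toNNReal) (s := E.1)
    rw [measureReal_def] at a1 a2 a3 a4
    exact abs_le.2 ⟨by linarith, by linarith⟩
  refine le_trans ?_ (le_ciSup hb ⟨{x | A * r * s < |x|}, abs_meas _⟩)
  rw [measureReal_def] at hN hY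
  refine le_trans ?_ (neg_le_abs _)
  simp only
  linarith
end

section
/- Let A, P > 0 and r > 1/(√(1+P) − 1). Let X be a real random variable with |X| ≤ A almost surely and let Z ~ N(0,1) be independent of X. Then the relative entropy (with natural logarithm) of the law of X + Z with respect to N(0, 1+P) satisfies D( P_{X+Z} ‖ N(0, 1+P) ) ≥ 8 · ( Q(r A) − Q( (r√(1+P) − 1) A ) )². -/
open MeasureTheory ProbabilityTheory

open scoped Classical in
/-- Kullback–Leibler divergence (natural logarithm), valued in `EReal`:
`D(μ‖ν) = ∫ log(dμ/dν) dμ` if `μ ≪ ν` and the log-likelihood ratio is integrable,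
and `+∞` otherwise. -/
noncomputable def klDiv {α : Type*} [MeasurableSpace α] (μ ν : Measure α) : EReal :=
  if μ ≪ ν ∧ Integrable (llr μ ν) μ then ((∫ x, llr μ ν x ∂μ : ℝ) : EReal) else ⊤

/-- Pinsker's inequality for a single event, through the variational formula and
Hoeffding's lemma. -/
lemma pinsker_event {α : Type*} [MeasurableSpace α] (μ ν : Measure α)
    [IsProbabilityMeasure μ] [IsProbabilityMeasure ν] (hμν : μ ≪ ν)
    (h_int : Integrable (llr μ ν) μ) {E : Set α} (hE : MeasurableSet E) :
    2 * (μ.real E - ν.real E) ^ 2 ≤ ∫ x, llr μ ν x ∂μ := by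
  set g : α → ℝ := E.indicator (fun _ => (1 : ℝ)) with hg
  have hgm : Measurable g := measurable_const.indicator hE
  have hIcc : ∀ x, g x ∈ Set.Icc (0 : ℝ) 1 := by
    intro x
    by_cases hx : x ∈ E <;> simp [hg, hx]
  have hgν : ∫ x, g x ∂ν = ν.real E := by
    rw [hg, integral_indicator hE]; simp
  have hgμ : ∫ x, g x ∂μ = μ.real E := by
    rw [hg, integral_indicator hE]; simp
  have hgi : Integrable g μ :=
    Integrable.of_mem_Icc 0 1 hgm.aemeasurable (ae_of_all _ hIcc)
  have hsub := hasSubgaussianMGF_of_mem_Icc (μ := ν) hgm.aemeasurable (ae_of_all _ hIcc)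
  rw [hgν] at hsub
  set d := μ.real E - ν.real E with hd
  have hexp := hsub.integrable_exp_mul (4 * d)
  have hcgf := hsub.cgf_le (4 * d)
  have hf : Integrable (fun x => 4 * d * (g x - ν.real E)) μ :=
    (hgi.sub (integrable_const _)).const_mul _
  have key := integral_llr_tilted_right hμν hf hexp h_int
  have hac : μ ≪ ν.tilted (fun x => 4 * d * (g x - ν.real E)) :=
    hμν.trans (absolutelyContinuous_tilted hexp)
  have := isProbabilityMeasure_tilted hexp
  have hnn := InformationTheory.integral_llr_add_sub_measure_univ_nonneg hac
    (integrable_llr_tilted_right hμν hf h_int hexp)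
  have hfi : ∫ x, 4 * d * (g x - ν.real E) ∂μ = 4 * d * d := by
    rw [integral_const_mul, integral_sub hgi (integrable_const _), hgμ]
    simp [hd]
  rw [key, hfi] at hnn
  simp only [probReal_univ] at hnn
  simp only [cgf, mgf] at hcgf
  norm_num at hcgf
  nlinarith [hcgf, hnn]

lemma gaussianReal_Ioi (x : ℝ) : (gaussianReal 0 1).real (Set.Ioi x) = gaussQ x := by
  rw [measureReal_def, gaussianReal_apply_eq_integral 0 one_ne_zero, ENNReal.toReal_ofReal
    (integral_nonneg (fun _ => gaussianPDFReal_nonneg _ _ _)), gaussQ]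
  congr 1
  ext y
  simp [gaussianPDFReal_def]
  ring

lemma gaussianReal_abs (x : ℝ) (hx : 0 ≤ x) :
    (gaussianReal 0 1).real {y | x < |y|} = 2 * gaussQ x := by
  have h1 : {y : ℝ | x < |y|} = Set.Ioi x ∪ Set.Iio (-x) := by
    ext y; simp [lt_abs, lt_neg]
  have h2 : (gaussianReal 0 1).real (Set.Iio (-x)) = gaussQ x := by
    have h := gaussianReal_map_neg (μ := 0) (v := 1)
    rw [neg_zero] at h
    rw [← h, map_measureReal_apply (by fun_prop) measurableSet_Iio, ← gaussianReal_Ioi]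
    congr 1
    ext y
    simp
  rw [h1, measureReal_union _ measurableSet_Iio, h2, gaussianReal_Ioi]
  · ring
  · rw [Set.disjoint_left]
    intro y hy hy'
    simp only [Set.mem_Ioi, Set.mem_Iio] at hy hy'
    linarith

lemma gaussQ_anti {x y : ℝ} (h : x ≤ y) : gaussQ y ≤ gaussQ x := by
  rw [← gaussianReal_Ioi, ← gaussianReal_Ioi]
  exact measureReal_mono (Set.Ioi_subset_Ioi h)

/-- Let `A, P > 0` and `r > 1/(√(1+P)-1)`, let `X` be a real random variable
with `|X| ≤ A` a.s. and `Z ~ N(0,1)` independent of `X`. Then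
`D(P_{X+Z} ‖ N(0,1+P)) ≥ 8 (Q(rA) - Q((r√(1+P)-1)A))²`. -/
theorem output_kl_lower_bound
    {Ω : Type*} [MeasureSpace Ω] [IsProbabilityMeasure (ℙ : Measure Ω)]
    (A P r : ℝ) (hA : 0 < A) (hP : 0 < P)
    (hr : 1 / (Real.sqrt (1 + P) - 1) < r)
    (X Z : Ω → ℝ) (hX : Measurable X) (hZ : Measurable Z)
    (hindep : IndepFun X Z ℙ)
    (hZlaw : Measure.map Z ℙ = gaussianReal 0 1)
    (hXA : ∀ᵐ ω ∂ℙ, |X ω| ≤ A) :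
    ((8 * (gaussQ (r * A) - gaussQ ((r * Real.sqrt (1 + P) - 1) * A)) ^ 2 : ℝ) : EReal) ≤
      klDiv (Measure.map (fun ω => X ω + Z ω) ℙ) (gaussianReal 0 (1 + P).toNNReal) := by
  have hsum : Measurable (fun ω => X ω + Z ω) := hX.add hZ
  have : IsProbabilityMeasure (Measure.map (fun ω => X ω + Z ω) (ℙ : Measure Ω)) :=
    Measure.isProbabilityMeasure_map hsum.aemeasurable
  rw [klDiv]
  split_ifs with h
  swap
  · exact le_top
  rw [EReal.coe_le_coe_iff]
  set s := Real.sqrt (1 + P) with hs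
  have hs2 : s ^ 2 = 1 + P := Real.sq_sqrt (by linarith)
  have hs1 : 1 < s := by
    rw [hs]; exact Real.lt_sqrt_of_sq_lt (by linarith)
  have hr1 : 1 < r * (s - 1) := (div_lt_iff₀ (by linarith)).1 hr
  have hr0 : 0 < r := lt_trans (by have : 0 < s - 1 := by linarith
                                   positivity) hr
  have hE : MeasurableSet {y : ℝ | r * s * A < |y|} :=
    measurableSet_lt measurable_const (by fun_prop)
  refine le_trans ?_ (pinsker_event _ _ h.1 h.2 hE)
  have hν : (gaussianReal 0 (1 + P).toNNReal).real {y : ℝ | r * s * A < |y|}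
      = 2 * gaussQ (r * A) := by
    have hm := gaussianReal_map_const_mul (μ := 0) (v := 1) s
    have hv : (NNReal.mk (s ^ 2) (sq_nonneg s) * 1 : NNReal) = (1 + P).toNNReal := by
      ext
      simp [hs2, hP.le, add_nonneg]
    rw [mul_zero, hv] at hm
    rw [← hm, map_measureReal_apply (by fun_prop) hE, ← gaussianReal_abs _ (by positivity)]
    congr 1
    ext y
    simp only [Set.preimage_setOf_eq, Set.mem_setOf_eq, abs_mul, abs_of_pos (by linarith : 0 < s)]
    rw [show r * s * A = s * (r * A) by ring, mul_lt_mul_iff_right₀ (by linarith)]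
  have hμ : (Measure.map (fun ω => X ω + Z ω) (ℙ : Measure Ω)).real {y : ℝ | r * s * A < |y|}
      ≤ 2 * gaussQ ((r * s - 1) * A) := by
    have hE' : MeasurableSet {y : ℝ | (r * s - 1) * A < |y|} :=
      measurableSet_lt measurable_const (by fun_prop)
    rw [← gaussianReal_abs _ (mul_nonneg (by nlinarith) hA.le), ← hZlaw,
      map_measureReal_apply hsum hE, map_measureReal_apply hZ hE']
    refine ENNReal.toReal_mono (measure_ne_top _ _) (measure_mono_ae ?_)
    filter_upwards [hXA] with ω hω hω'
    have hω'' : r * s * A < |X ω + Z ω| := hω'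
    have := abs_add_le (X ω) (Z ω)
    show (r * s - 1) * A < |Z ω|
    linarith
  rw [hν]
  have hq : gaussQ ((r * s - 1) * A) ≤ gaussQ (r * A) := gaussQ_anti (by nlinarith)
  nlinarith [hμ, hq]
end

section
/- Let A, P > 0 and r > 1/(√(1+P) − 1). Let X be a real random variable with |X| ≤ A almost surely and E[X²] ≤ P, and let Z ~ N(0,1) be independent of X. Then (1/2) ln(1+P) − I(X; X+Z) ≥ 8 · ( Q(r A) − Q( (r√(1+P) − 1) A ) )². -/
open MeasureTheory ProbabilityTheory

/-- The mutual information `I(X; Y)` of two real random variables: the KL divergence between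
the joint law of `(X, Y)` and the product of its marginals. -/
noncomputable def mutInfoRV {Ω : Type*} [MeasureSpace Ω] (X Y : Ω → ℝ) : EReal :=
  klDiv (Measure.map (fun ω => (X ω, Y ω)) ℙ)
    ((Measure.map (fun ω => (X ω, Y ω)) ℙ).fst.prod (Measure.map (fun ω => (X ω, Y ω)) ℙ).snd)

open scoped ENNReal NNReal
open Real (log exp sqrt pi)

lemma aux_joint (μ : Measure ℝ) [IsProbabilityMeasure μ] :
    Measure.map (fun z : ℝ × ℝ => (z.1, z.1 + z.2)) (μ.prod (gaussianReal 0 1))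
      = (μ.prod volume).withDensity (fun z => gaussianPDF z.1 1 z.2) := by
  have hm : Measurable (fun z : ℝ × ℝ => gaussianPDF z.1 1 z.2) := by fun_prop
  refine Measure.ext_of_lintegral _ fun f hf => ?_
  rw [lintegral_map hf (by fun_prop), lintegral_prod _ (by fun_prop),
    lintegral_withDensity_eq_lintegral_mul _ hm hf, lintegral_prod _ (by fun_prop)]
  refine lintegral_congr fun x => ?_
  have h1 := gaussianReal_map_const_add (μ := 0) (v := 1) x
  rw [zero_add] at h1
  have hfx : Measurable fun y => f (x, y) := by fun_prop
  have h2 : ∫⁻ z, f (x, x + z) ∂(gaussianReal 0 1) = ∫⁻ y, f (x, y) ∂(gaussianReal x 1) := by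
    rw [← h1, lintegral_map hfx (by fun_prop)]
  simp only [h2]
  rw [gaussianReal_of_var_ne_zero _ one_ne_zero,
    lintegral_withDensity_eq_lintegral_mul _ (by fun_prop) hfx]
  rfl

/-- density of `X + Z`. -/
noncomputable def pYd (μ : Measure ℝ) (y : ℝ) : ℝ := ∫ x, gaussianPDFReal x 1 y ∂μ

lemma gpdf_one (x y : ℝ) : gaussianPDFReal x 1 y = (√(2 * pi))⁻¹ * exp (-(y - x) ^ 2 / 2) := by
  simp [gaussianPDFReal]

lemma gpdf_le (x y : ℝ) : gaussianPDFReal x 1 y ≤ (√(2 * pi))⁻¹ := by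
  rw [gpdf_one]
  have : exp (-(y - x) ^ 2 / 2) ≤ 1 := Real.exp_le_one_iff.2 (by nlinarith [sq_nonneg (y - x)])
  exact mul_le_of_le_one_right (by positivity) this

lemma gpdf_meas : Measurable (fun z : ℝ × ℝ => gaussianPDFReal z.1 1 z.2) := by fun_prop

lemma gpdf_int (μ : Measure ℝ) [IsProbabilityMeasure μ] (y : ℝ) :
    Integrable (fun x => gaussianPDFReal x 1 y) μ := by
  refine Integrable.of_bound (C := (√(2 * pi))⁻¹) (by fun_prop) (ae_of_all _ fun x => ?_)
  rw [Real.norm_of_nonneg (gaussianPDFReal_nonneg _ _ _)]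
  exact gpdf_le x y

lemma pYd_meas (μ : Measure ℝ) [IsProbabilityMeasure μ] : Measurable (pYd μ) := by
  have : StronglyMeasurable (fun z : ℝ × ℝ => gaussianPDFReal z.2 1 z.1) := by fun_prop
  exact this.integral_prod_right'.measurable

lemma pYd_ofReal (μ : Measure ℝ) [IsProbabilityMeasure μ] (y : ℝ) :
    ENNReal.ofReal (pYd μ y) = ∫⁻ x, gaussianPDF x 1 y ∂μ := by
  rw [pYd, ofReal_integral_eq_lintegral_ofReal (gpdf_int μ y)
    (ae_of_all _ fun x => gaussianPDFReal_nonneg _ _ _)]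
  rfl

lemma pYd_le (μ : Measure ℝ) [IsProbabilityMeasure μ] (y : ℝ) : pYd μ y ≤ (√(2 * pi))⁻¹ := by
  calc pYd μ y ≤ ∫ x, (√(2 * pi))⁻¹ ∂μ :=
        integral_mono (gpdf_int μ y) (integrable_const _) fun x => gpdf_le x y
    _ = _ := by simp

lemma pYd_ge (μ : Measure ℝ) [IsProbabilityMeasure μ] (A : ℝ) (h : ∀ᵐ x ∂μ, |x| ≤ A) (y : ℝ) :
    (√(2 * pi))⁻¹ * exp (-(y ^ 2 + A ^ 2)) ≤ pYd μ y := by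
  calc _ = ∫ x, (√(2 * pi))⁻¹ * exp (-(y ^ 2 + A ^ 2)) ∂μ := by simp
    _ ≤ pYd μ y := by
      refine integral_mono_ae (integrable_const _) (gpdf_int μ y) ?_
      filter_upwards [h] with x hx
      rw [gpdf_one]
      have h2 : x ^ 2 ≤ A ^ 2 := sq_le_sq' (abs_le.1 hx).1 (abs_le.1 hx).2
      gcongr
      nlinarith [sq_nonneg (y + x)]

lemma pYd_pos (μ : Measure ℝ) [IsProbabilityMeasure μ] (A : ℝ) (h : ∀ᵐ x ∂μ, |x| ≤ A) (y : ℝ) :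
    0 < pYd μ y := lt_of_lt_of_le (by positivity) (pYd_ge μ A h y)

lemma log_pYd_bound (μ : Measure ℝ) [IsProbabilityMeasure μ] (A : ℝ) (h : ∀ᵐ x ∂μ, |x| ≤ A)
    (y : ℝ) : |log (pYd μ y)| ≤ |log (√(2 * pi))⁻¹| + A ^ 2 + y ^ 2 := by
  have h1 := Real.log_le_log (pYd_pos μ A h y) (pYd_le μ y)
  have h2 := Real.log_le_log (by positivity) (pYd_ge μ A h y)
  rw [Real.log_mul (by positivity) (by positivity), Real.log_exp] at h2
  have h3 := le_abs_self (log (√(2 * pi))⁻¹)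
  have h4 := neg_abs_le (log (√(2 * pi))⁻¹)
  rw [abs_le]
  constructor <;> nlinarith [sq_nonneg A, sq_nonneg y]

lemma aux_snd (μ : Measure ℝ) [IsProbabilityMeasure μ] :
    ((μ.prod volume).withDensity (fun z => gaussianPDF z.1 1 z.2)).snd
      = volume.withDensity (fun y => ENNReal.ofReal (pYd μ y)) := by
  have hm : Measurable (fun z : ℝ × ℝ => gaussianPDF z.1 1 z.2) := by fun_prop
  have hp := pYd_meas μ
  refine Measure.ext_of_lintegral _ fun f hf => ?_
  rw [Measure.snd, lintegral_map hf measurable_snd,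
    lintegral_withDensity_eq_lintegral_mul _ hm (by fun_prop),
    lintegral_withDensity_eq_lintegral_mul _ (by fun_prop) hf, lintegral_prod_symm' _ (by fun_prop)]
  refine lintegral_congr fun y => ?_
  simp only [Pi.mul_apply]
  rw [lintegral_mul_const _ (by fun_prop), pYd_ofReal]

lemma aux_dens (μ : Measure ℝ) [IsProbabilityMeasure μ] (A : ℝ) (h : ∀ᵐ x ∂μ, |x| ≤ A) :
    (μ.prod volume).withDensity (fun z => gaussianPDF z.1 1 z.2)
      = (μ.prod (volume.withDensity (fun y => ENNReal.ofReal (pYd μ y)))).withDensity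
        (fun z => ENNReal.ofReal (gaussianPDFReal z.1 1 z.2 / pYd μ z.2)) := by
  have hp := pYd_meas μ
  have hg := gpdf_meas
  rw [prod_withDensity_right (by fun_prop), ← withDensity_mul _ (by fun_prop) (by fun_prop)]
  congr 1
  ext z
  have := pYd_pos μ A h z.2
  rw [Pi.mul_apply, ← ENNReal.ofReal_mul this.le, mul_div_cancel₀ _ this.ne']
  rfl

lemma gibbs (p h : ℝ → ℝ) (hp : Measurable p) (hh : Measurable h) (hp0 : ∀ y, 0 < p y)
    (hh0 : ∀ y, 0 < h y) (ν : Measure ℝ) [IsProbabilityMeasure ν]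
    (hν : ν = volume.withDensity (fun y => ENNReal.ofReal (p y)))
    (h1 : ∫⁻ y, ENNReal.ofReal (h y) = 1)
    (hip : Integrable (fun y => log (p y)) ν) (hih : Integrable (fun y => log (h y)) ν) :
    ∫ y, log (h y) ∂ν ≤ ∫ y, log (p y) ∂ν := by
  have hl : ∫⁻ y, ENNReal.ofReal (h y / p y) ∂ν = 1 := by
    rw [hν, lintegral_withDensity_eq_lintegral_mul _ (by fun_prop) (by fun_prop), ← h1]
    refine lintegral_congr fun y => ?_
    rw [Pi.mul_apply, ← ENNReal.ofReal_mul (hp0 y).le, mul_div_cancel₀ _ (hp0 y).ne']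
  have hnn : ∀ y, 0 ≤ h y / p y := fun y => (div_pos (hh0 y) (hp0 y)).le
  have hi : Integrable (fun y => h y / p y) ν := by
    refine ⟨(hh.div hp).aestronglyMeasurable, ?_⟩
    rw [hasFiniteIntegral_iff_ofReal (ae_of_all _ hnn), hl]
    exact ENNReal.one_lt_top
  have hI : ∫ y, h y / p y ∂ν = 1 := by
    rw [integral_eq_lintegral_of_nonneg_ae (ae_of_all _ hnn) (hh.div hp).aestronglyMeasurable, hl]; rfl
  have key : ∫ y, (log (h y) - log (p y)) ∂ν ≤ ∫ y, (h y / p y - 1) ∂ν := by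
    refine integral_mono (hih.sub hip) (hi.sub (integrable_const _)) fun y => ?_
    simp only
    rw [← Real.log_div (hh0 y).ne' (hp0 y).ne']
    exact Real.log_le_sub_one_of_pos (div_pos (hh0 y) (hp0 y))
  rw [integral_sub hih hip, integral_sub hi (integrable_const _), hI] at key
  simp at key
  linarith

lemma hoeffding (q : Measure ℝ) [IsProbabilityMeasure q] (B : Set ℝ) (hB : MeasurableSet B)
    (l : ℝ) : log (∫ y, exp (l * B.indicator 1 y) ∂q) ≤ l * q.real B + l ^ 2 / 8 := by
  have h := (hasSubgaussianMGF_of_mem_Icc (μ := q) (X := fun y => B.indicator (1 : ℝ → ℝ) y)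
    (a := 0) (b := 1) (by fun_prop (disch := assumption)) (ae_of_all _ fun y => by
      by_cases hy : y ∈ B <;> simp [hy]))
  have h2 := h.mgf_le l
  have hI : ∫ y, B.indicator (1 : ℝ → ℝ) y ∂q = q.real B := by
    rw [integral_indicator_one hB]
  rw [mgf, hI] at h2
  have h3 : ∀ y, exp (l * (B.indicator (1 : ℝ → ℝ) y - q.real B))
      = exp (l * B.indicator (1 : ℝ → ℝ) y) * exp (-(l * q.real B)) := fun y => by
    rw [← Real.exp_add]; ring_nf
  simp only [h3] at h2
  rw [integral_mul_const, Real.exp_neg, ← div_eq_mul_inv, div_le_iff₀ (Real.exp_pos _),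
    ← Real.exp_add] at h2
  have hpos : 0 < ∫ y, exp (l * B.indicator (1 : ℝ → ℝ) y) ∂q := by
    have hi := h.integrable_exp_mul l
    simp only [hI, h3] at hi
    have hi' := hi.mul_const (exp (l * q.real B))
    refine integral_exp_pos ?_
    refine hi'.congr (ae_of_all _ fun y => ?_)
    simp only
    rw [mul_assoc, ← Real.exp_add]; simp
  have h4 := Real.log_le_log hpos h2
  rw [Real.log_exp] at h4
  refine h4.trans (le_of_eq ?_)
  simp
  ring

lemma gaussQ_eq (x : ℝ) : gaussQ x = (gaussianReal 0 1).real (Set.Ioi x) := by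
  rw [Measure.real, gaussianReal_apply_eq_integral _ one_ne_zero, ENNReal.toReal_ofReal
    (setIntegral_nonneg measurableSet_Ioi fun y _ => gaussianPDFReal_nonneg _ _ _), gaussQ]
  refine integral_congr_ae (ae_of_all _ fun y => ?_)
  simp only [gpdf_one]
  rw [sub_zero, div_eq_inv_mul]

lemma gaussQ_anti_s14 {a b : ℝ} (h : a ≤ b) : gaussQ b ≤ gaussQ a := by
  rw [gaussQ_eq, gaussQ_eq]
  exact measureReal_mono (Set.Ioi_subset_Ioi h)

lemma gauss_abs (a : ℝ) (ha : 0 ≤ a) : (gaussianReal 0 1).real {z | a < |z|} = 2 * gaussQ a := by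
  have h1 : {z : ℝ | a < |z|} = Set.Ioi a ∪ Set.Iio (-a) := by
    ext z; simp only [Set.mem_ofPred_eq, lt_abs, Set.mem_union, Set.mem_Ioi, Set.mem_Iio]
    constructor <;> rintro (h | h)
    · exact Or.inl h
    · exact Or.inr (by linarith)
    · exact Or.inl h
    · exact Or.inr (by linarith)
  have hd : Disjoint (Set.Ioi a) (Set.Iio (-a)) := by
    rw [Set.disjoint_left]; intro z hz hz'
    simp only [Set.mem_Ioi, Set.mem_Iio] at hz hz'; linarith
  have h2 : (gaussianReal 0 1).real (Set.Iio (-a)) = gaussQ a := by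
    have h3 := gaussianReal_map_neg (μ := 0) (v := 1)
    rw [neg_zero] at h3
    rw [gaussQ_eq]
    conv_lhs => rw [← h3]
    rw [map_measureReal_apply (by fun_prop) measurableSet_Iio]
    congr 1; ext z; simp
  rw [h1, measureReal_union hd measurableSet_Iio, h2, gaussQ_eq]; ring

lemma q_abs (P a : ℝ) (hP : 0 < P) (ha : 0 ≤ a) :
    (gaussianReal 0 (1 + P).toNNReal).real {y | a * √(1 + P) < |y|} = 2 * gaussQ a := by
  have hs : 0 < √(1 + P) := Real.sqrt_pos.2 (by linarith)
  have h := gaussianReal_map_const_mul (μ := 0) (v := 1) (√(1 + P))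
  have hv : (⟨√(1 + P) ^ 2, sq_nonneg _⟩ : ℝ≥0) * 1 = (1 + P).toNNReal := by
    ext; simp [Real.sq_sqrt (by linarith : (0:ℝ) ≤ 1 + P), Real.coe_toNNReal _ (by linarith : (0:ℝ) ≤ 1 + P)]
  rw [mul_zero] at h
  rw [← hv]
  erw [← h]
  rw [map_measureReal_apply (by fun_prop) (measurableSet_lt (by fun_prop) (by fun_prop)),
    ← gauss_abs a ha]
  congr 1; ext z
  simp only [Set.mem_preimage, Set.mem_ofPred_eq, abs_mul, abs_of_pos hs]
  rw [mul_comm, mul_lt_mul_iff_right₀ hs]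

/-- tilted Gaussian density. -/
noncomputable def tilt (v : ℝ≥0) (B : Set ℝ) (l c y : ℝ) : ℝ :=
  gaussianPDFReal 0 v y * (exp (l * B.indicator 1 y) / c)

lemma exp_ind_int (q : Measure ℝ) [IsProbabilityMeasure q] (B : Set ℝ) (hB : MeasurableSet B)
    (l : ℝ) : Integrable (fun y => exp (l * B.indicator (1 : ℝ → ℝ) y)) q := by
  have hm : Measurable (B.indicator (1 : ℝ → ℝ)) := measurable_one.indicator hB
  refine Integrable.of_bound (C := exp |l|) (by fun_prop) (ae_of_all _ fun y => ?_)
  rw [Real.norm_of_nonneg (Real.exp_pos _).le]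
  apply Real.exp_le_exp.2
  by_cases hy : y ∈ B <;> simp [hy, le_abs_self]

lemma tilt_lint (v : ℝ≥0) (hv : v ≠ 0) (B : Set ℝ) (hB : MeasurableSet B) (l c : ℝ)
    (hc : c = ∫ y, exp (l * B.indicator 1 y) ∂(gaussianReal 0 v)) :
    0 < c ∧ ∫⁻ y, ENNReal.ofReal (tilt v B l c y) = 1 := by
  have hm : Measurable (B.indicator (1 : ℝ → ℝ)) := measurable_one.indicator hB
  have hi := exp_ind_int (gaussianReal 0 v) B hB l
  have hc0 : 0 < c := by rw [hc]; exact integral_exp_pos hi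
  refine ⟨hc0, ?_⟩
  have h1 : ∫⁻ y, ENNReal.ofReal (exp (l * B.indicator (1 : ℝ → ℝ) y) / c) ∂(gaussianReal 0 v) = 1 := by
    rw [← ofReal_integral_eq_lintegral_ofReal (hi.div_const c)
      (ae_of_all _ fun y => by simp only [Pi.zero_apply]; positivity), integral_div, ← hc, div_self hc0.ne']
    simp
  rw [← h1, gaussianReal_of_var_ne_zero _ hv,
    lintegral_withDensity_eq_lintegral_mul _ (by fun_prop) (by fun_prop)]
  refine lintegral_congr fun y => ?_
  rw [tilt, ENNReal.ofReal_mul (gaussianPDFReal_nonneg _ _ _)]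
  rfl

lemma log_tilt (P : ℝ) (hP : 0 < P) (B : Set ℝ) (l c y : ℝ) (hc : 0 < c) :
    log (tilt (1 + P).toNNReal B l c y) = -(1 / 2) * log (2 * pi) - (1 / 2) * log (1 + P)
      - y ^ 2 / (2 * (1 + P)) + l * B.indicator 1 y - log c := by
  have hv : (((1 + P).toNNReal : ℝ≥0) : ℝ) = 1 + P := Real.coe_toNNReal _ (by linarith)
  have hp : 0 < 1 + P := by linarith
  rw [tilt, gaussianPDFReal, hv, Real.log_mul (by positivity) (by positivity),
    Real.log_mul (by positivity) (by positivity), Real.log_inv, Real.log_sqrt (by positivity),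
    Real.log_div (by positivity) (by positivity), Real.log_exp, Real.log_exp,
    Real.log_mul (by positivity) (by positivity), sub_zero]
  ring

lemma log_gpdf (x y : ℝ) : log (gaussianPDFReal x 1 y) = -(1 / 2) * log (2 * pi) - (y - x) ^ 2 / 2 := by
  rw [gpdf_one, Real.log_mul (by positivity) (by positivity), Real.log_inv,
    Real.log_sqrt (by positivity), Real.log_exp]
  ring
/-- Let `A, P > 0` and `r > 1/(√(1+P)-1)`, and let `X` be a real random
variable with `|X| ≤ A` a.s. and `E[X²] ≤ P`, with `Z ~ N(0,1)` independent of `X`. Then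
`(1/2) ln(1+P) - I(X; X+Z) ≥ 8 (Q(rA) - Q((r√(1+P)-1)A))²`. -/
theorem mutualInfo_gap_lower_bound
    {Ω : Type*} [MeasureSpace Ω] [IsProbabilityMeasure (ℙ : Measure Ω)]
    (A P r : ℝ) (hA : 0 < A) (hP : 0 < P)
    (hr : 1 / (Real.sqrt (1 + P) - 1) < r)
    (X Z : Ω → ℝ) (hX : Measurable X) (hZ : Measurable Z)
    (hindep : IndepFun X Z ℙ)
    (hZlaw : Measure.map Z ℙ = gaussianReal 0 1)
    (hXA : ∀ᵐ ω ∂ℙ, |X ω| ≤ A)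
    (hX2 : ∫ ω, (X ω) ^ 2 ∂ℙ ≤ P) :
    ((8 * (gaussQ (r * A) - gaussQ ((r * Real.sqrt (1 + P) - 1) * A)) ^ 2 : ℝ) : EReal) ≤
      (((1 / 2) * Real.log (1 + P) : ℝ) : EReal) - mutInfoRV X (fun ω => X ω + Z ω) := by
  have hp1 : 0 < 1 + P := by linarith
  set s := √(1 + P) with hs
  have hs1 : 1 < s := by rw [hs]; exact Real.lt_sqrt_of_sq_lt (by linarith)
  have hr0 : 0 < r := lt_trans (by have : 0 < s - 1 := by linarith
                                   positivity) hr
  have hrs : 1 < r * (s - 1) := by rwa [div_lt_iff₀ (by linarith)] at hr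
  -- laws
  set μ := Measure.map X ℙ with hμ
  have : IsProbabilityMeasure μ := Measure.isProbabilityMeasure_map hX.aemeasurable
  have hμA : ∀ᵐ x ∂μ, |x| ≤ A :=
    (ae_map_iff hX.aemeasurable (measurableSet_le (by fun_prop) (by fun_prop))).2 hXA
  have hY : Measurable (fun ω => X ω + Z ω) := hX.add hZ
  set ν := Measure.map (fun ω => X ω + Z ω) ℙ with hν
  have : IsProbabilityMeasure ν := Measure.isProbabilityMeasure_map hY.aemeasurable
  set J := Measure.map (fun ω => (X ω, X ω + Z ω)) ℙ with hJ
  have hXY : Measurable (fun ω => (X ω, X ω + Z ω)) := hX.prodMk hY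
  have hJ1 : J.fst = μ := by rw [hJ, Measure.fst_map_prodMk hY]
  have hJ2 : J.snd = ν := by rw [hJ, Measure.snd_map_prodMk hX]
  have hJd : J = (μ.prod volume).withDensity (fun z => gaussianPDF z.1 1 z.2) := by
    rw [← aux_joint, ← hZlaw, hμ, ← hindep.map_prod_eq_prod_map_map hX.aemeasurable hZ.aemeasurable,
      Measure.map_map (by fun_prop) (by fun_prop)]
    rfl
  have hνd : ν = volume.withDensity (fun y => ENNReal.ofReal (pYd μ y)) := by
    rw [← hJ2, hJd, aux_snd]
  have hpm := pYd_meas μ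
  have hgm := gpdf_meas
  have hppos := pYd_pos μ A hμA
  have hfm : Measurable (fun z : ℝ × ℝ =>
      ENNReal.ofReal (gaussianPDFReal z.1 1 z.2 / pYd μ z.2)) := by fun_prop
  have hJp : J = (μ.prod ν).withDensity
        (fun z => ENNReal.ofReal (gaussianPDFReal z.1 1 z.2 / pYd μ z.2)) := by
    rw [hνd, ← aux_dens μ A hμA, hJd]
  have hac : J ≪ μ.prod ν := by
    rw [hJp]; exact withDensity_absolutelyContinuous _ _
  have hllr : llr J (μ.prod ν) =ᵐ[J] fun z => log (gaussianPDFReal z.1 1 z.2) - log (pYd μ z.2) := by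
    have h1 := Measure.rnDeriv_withDensity (μ.prod ν) hfm
    rw [← hJp] at h1
    filter_upwards [hac.ae_le h1] with z hz
    have hg := gaussianPDFReal_pos z.1 1 z.2 one_ne_zero
    rw [llr, hz, ENNReal.toReal_ofReal (div_pos hg (hppos _)).le, Real.log_div hg.ne' (hppos _).ne']
  -- moments
  have hXb : ∀ᵐ ω, ‖X ω‖ ≤ A := hXA
  have hXL : MemLp X 2 ℙ := MemLp.of_bound hX.aestronglyMeasurable A hXb
  have hZL : MemLp Z 2 ℙ := by
    have h := memLp_id_gaussianReal (μ := 0) (v := 1) 2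
    rw [← hZlaw] at h
    exact (memLp_map_measure_iff (by fun_prop) hZ.aemeasurable).1 h
  have iX2 : Integrable (fun ω => X ω ^ 2) ℙ := hXL.integrable_sq
  have iZ2 : Integrable (fun ω => Z ω ^ 2) ℙ := hZL.integrable_sq
  have iX := hXL.integrable one_le_two
  have iZ := hZL.integrable one_le_two
  have iXZ : Integrable (fun ω => X ω * Z ω) ℙ := hXL.integrable_mul hZL
  have eZ : ∫ ω, Z ω = 0 := by
    have h := integral_id_gaussianReal (μ := 0) (v := 1)
    rw [← hZlaw, integral_map hZ.aemeasurable (by fun_prop)] at h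
    exact h
  have eZ2 : ∫ ω, Z ω ^ 2 = 1 := by
    have h := variance_fun_id_gaussianReal (μ := 0) (v := 1)
    rw [variance_of_integral_eq_zero (by fun_prop) (by rw [integral_id_gaussianReal]), ← hZlaw,
      integral_map hZ.aemeasurable (by fun_prop)] at h
    simpa using h
  have eXZ : ∫ ω, X ω * Z ω = 0 := by
    rw [hindep.integral_fun_mul_eq_mul_integral hX.aestronglyMeasurable hZ.aestronglyMeasurable, eZ,
      mul_zero]
  have hY2 : (fun ω => (X ω + Z ω) ^ 2) = fun ω => X ω ^ 2 + 2 * (X ω * Z ω) + Z ω ^ 2 := by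
    ext ω; ring
  have iY2 : Integrable (fun ω => (X ω + Z ω) ^ 2) ℙ := by
    rw [hY2]; exact (iX2.add (iXZ.const_mul 2)).add iZ2
  have eY2 : ∫ ω, (X ω + Z ω) ^ 2 ≤ 1 + P := by
    rw [hY2, integral_add (by exact iX2.add (iXZ.const_mul 2)) iZ2, integral_add iX2 (iXZ.const_mul 2),
      integral_const_mul, eXZ, eZ2]
    linarith
  have iνy2 : Integrable (fun y : ℝ => y ^ 2) ν :=
    (integrable_map_measure (by fun_prop) hY.aemeasurable).2 iY2
  have eνy2 : ∫ y, y ^ 2 ∂ν ≤ 1 + P := by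
    rw [hν, integral_map hY.aemeasurable (by fun_prop)]; exact eY2
  have ilp : Integrable (fun y => log (pYd μ y)) ν := by
    refine Integrable.mono' ((integrable_const (|log (√(2 * pi))⁻¹| + A ^ 2)).add iνy2)
      hpm.log.aestronglyMeasurable (ae_of_all _ fun y => log_pYd_bound μ A hμA y)
  have ilpω : Integrable (fun ω => log (pYd μ (X ω + Z ω))) ℙ :=
    (integrable_map_measure hpm.log.aestronglyMeasurable hY.aemeasurable).1 ilp
  -- the mutual information
  have hFm : Measurable (fun z : ℝ × ℝ => log (gaussianPDFReal z.1 1 z.2) - log (pYd μ z.2)) := by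
    fun_prop
  have hFeq : (fun ω => log (gaussianPDFReal (X ω) 1 (X ω + Z ω)) - log (pYd μ (X ω + Z ω)))
      = fun ω => (-(1 / 2) * log (2 * pi) - Z ω ^ 2 / 2) - log (pYd μ (X ω + Z ω)) := by
    ext ω; rw [log_gpdf]; ring
  have iG : Integrable (fun ω => -(1 / 2) * log (2 * pi) - Z ω ^ 2 / 2) ℙ :=
    (integrable_const _).sub (iZ2.div_const 2)
  have iF : Integrable (fun z : ℝ × ℝ => log (gaussianPDFReal z.1 1 z.2) - log (pYd μ z.2)) J := by
    rw [hJ, integrable_map_measure hFm.aestronglyMeasurable hXY.aemeasurable]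
    change Integrable (fun ω => log (gaussianPDFReal (X ω) 1 (X ω + Z ω)) - log (pYd μ (X ω + Z ω))) ℙ
    rw [hFeq]; exact iG.sub ilpω
  have eI : ∫ z, llr J (μ.prod ν) z ∂J
      = -(1 / 2) * log (2 * pi) - 1 / 2 - ∫ y, log (pYd μ y) ∂ν := by
    rw [integral_congr_ae hllr, hJ, integral_map hXY.aemeasurable hFm.aestronglyMeasurable]
    simp only
    rw [hFeq, integral_sub iG ilpω, integral_sub (integrable_const _) (iZ2.div_const 2),
      integral_div, eZ2, hν, integral_map hY.aemeasurable hpm.log.aestronglyMeasurable]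
    simp
  have hmi : mutInfoRV X (fun ω => X ω + Z ω) = ((∫ z, llr J (μ.prod ν) z ∂J : ℝ) : EReal) := by
    rw [mutInfoRV, ← hJ, hJ1, hJ2, klDiv, if_pos ⟨hac, iF.congr hllr.symm⟩]
  rw [hmi, ← EReal.coe_sub, EReal.coe_le_coe_iff, eI]
  -- the event
  set B : Set ℝ := {y | r * A * s < |y|} with hBdef
  have hB : MeasurableSet B := measurableSet_lt (by fun_prop) (by fun_prop)
  set v := (1 + P).toNNReal with hv
  have hv0 : v ≠ 0 := by rw [hv]; simpa using hp1
  have hqB : (gaussianReal 0 v).real B = 2 * gaussQ (r * A) := q_abs P (r * A) hP (by positivity)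
  have hge : r * A ≤ (r * s - 1) * A := mul_le_mul_of_nonneg_right (by linarith) hA.le
  have hνB : ν.real B ≤ 2 * gaussQ ((r * s - 1) * A) := by
    rw [← gauss_abs _ ((by positivity : 0 ≤ r * A).trans hge), ← hZlaw, hν,
      map_measureReal_apply hY hB,
      map_measureReal_apply hZ (measurableSet_lt (by fun_prop) (by fun_prop))]
    refine ENNReal.toReal_mono (measure_ne_top _ _) (measure_mono_ae ?_)
    filter_upwards [hXA] with ω hω h
    change r * A * s < |X ω + Z ω| at h
    change (r * s - 1) * A < |Z ω|
    have := abs_add_le (X ω) (Z ω)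
    linarith
  have hQ := gaussQ_anti_s14 hge
  set l : ℝ := 4 * (ν.real B - (gaussianReal 0 v).real B) with hl
  obtain ⟨hc0, htl⟩ := tilt_lint v hv0 B hB l _ rfl
  have hho := hoeffding (gaussianReal 0 v) B hB l
  set c := ∫ y, exp (l * B.indicator 1 y) ∂(gaussianReal 0 v) with hc
  have him : Measurable (B.indicator (1 : ℝ → ℝ)) := measurable_one.indicator hB
  have iind : Integrable (fun y => l * B.indicator (1 : ℝ → ℝ) y) ν :=
    ((integrable_const (1 : ℝ)).indicator hB).const_mul l
  have ik : Integrable (fun _ : ℝ => -(1 / 2) * log (2 * pi) - (1 / 2) * log (1 + P)) ν :=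
    integrable_const _
  have i1 := ik.sub (iνy2.div_const (2 * (1 + P)))
  have i2 := i1.add iind
  have i3 := i2.sub (integrable_const (log c))
  have hlt : (fun y => log (tilt v B l c y)) = fun y =>
      -(1 / 2) * log (2 * pi) - (1 / 2) * log (1 + P)
      - y ^ 2 / (2 * (1 + P)) + l * B.indicator 1 y - log c := by
    ext y; exact log_tilt P hP B l c y hc0
  have hgib := gibbs (pYd μ) (tilt v B l c) hpm (by unfold tilt; fun_prop) hppos
    (fun y => mul_pos (gaussianPDFReal_pos _ _ _ hv0) (by positivity)) ν hνd htl ilp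
    (by rw [hlt]; exact i3)
  have eind : ∫ y, B.indicator (1 : ℝ → ℝ) y ∂ν = ν.real B := integral_indicator_one hB
  have etilt : ∫ y, log (tilt v B l c y) ∂ν = -(1 / 2) * log (2 * pi) - (1 / 2) * log (1 + P)
      - (∫ y, y ^ 2 ∂ν) / (2 * (1 + P)) + l * ν.real B - log c := by
    rw [hlt, integral_sub (by exact i2) (integrable_const _), integral_add (by exact i1) iind,
      integral_sub ik (iνy2.div_const _), integral_div, integral_const_mul, eind]
    simp
  rw [etilt] at hgib
  have hhalf : (∫ y, y ^ 2 ∂ν) / (2 * (1 + P)) ≤ 1 / 2 := by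
    rw [div_le_div_iff₀ (by positivity) (by positivity)]; linarith
  have hmain : 2 * ((gaussianReal 0 v).real B - ν.real B) ^ 2 ≤
      1 / 2 * log (1 + P) - (-(1 / 2) * log (2 * pi) - 1 / 2 - ∫ y, log (pYd μ y) ∂ν) := by
    have : l * ν.real B - (l * (gaussianReal 0 v).real B + l ^ 2 / 8)
      = 2 * ((gaussianReal 0 v).real B - ν.real B) ^ 2 := by rw [hl]; ring
    linarith
  refine le_trans ?_ hmain
  have hd : 2 * (gaussQ (r * A) - gaussQ ((r * s - 1) * A))
      ≤ (gaussianReal 0 v).real B - ν.real B := by rw [hqB]; linarith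
  have := pow_le_pow_left₀ (by linarith) hd 2
  nlinarith
end

section
/- Fix A, P > 0 and define g(r) = Q(r A) − Q( (r√(1+P) − 1) A ) for r > 0, where Q is the standard normal tail function. Let r* = ( √(A² + P ln(1+P)) + A√(1+P) ) / (A P). Then r* > 1/(√(1+P) − 1), and for every r ≥ 1/(√(1+P) − 1) one has g(r) ≤ g(r*); that is, r* maximizes g over the interval [1/(√(1+P) − 1), ∞). -/
open MeasureTheory

lemma gaussQ_hasDerivAt (x : ℝ) :
    HasDerivAt gaussQ (-(Real.exp (-(x ^ 2) / 2) / Real.sqrt (2 * Real.pi))) x := by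
  set f : ℝ → ℝ := fun y => Real.exp (-(y ^ 2) / 2) / Real.sqrt (2 * Real.pi) with hf
  have hc : Continuous f := by fun_prop
  have hi : Integrable f := by
    have h := (integrable_exp_neg_mul_sq (b := 1 / 2) (by norm_num)).div_const
      (Real.sqrt (2 * Real.pi))
    refine h.congr (Filter.Eventually.of_forall fun y => ?_)
    simp only [hf]
    congr 2
    ring
  have hQ : gaussQ = fun x => gaussQ 0 - ∫ y in (0 : ℝ)..x, f y := by
    funext z
    have h := intervalIntegral.integral_interval_add_Ioi (a := 0) (b := z) (f := f) (μ := volume)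
      hi.integrableOn hi.integrableOn
    simp only [gaussQ]
    simp only [hf] at h ⊢
    linarith
  rw [hQ]
  exact (intervalIntegral.integral_hasDerivAt_right (hc.intervalIntegrable _ _)
    (hc.stronglyMeasurableAtFilter _ _) hc.continuousAt).const_sub _

/-- Fix `A, P > 0` and let `g(r) = Q(rA) - Q((r√(1+P)-1)A)` and
`r* = (√(A² + P ln(1+P)) + A√(1+P))/(AP)`. Then `r* > 1/(√(1+P)-1)` and `g(r) ≤ g(r*)` for
every `r ≥ 1/(√(1+P)-1)`, i.e. `r*` maximizes `g` on `[1/(√(1+P)-1), ∞)`. -/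
theorem gaussQ_difference_maximizer
    (A P : ℝ) (hA : 0 < A) (hP : 0 < P)
    (g : ℝ → ℝ)
    (hg : ∀ r, g r = gaussQ (r * A) - gaussQ ((r * Real.sqrt (1 + P) - 1) * A))
    (rstar : ℝ)
    (hrstar : rstar =
      (Real.sqrt (A ^ 2 + P * Real.log (1 + P)) + A * Real.sqrt (1 + P)) / (A * P)) :
    1 / (Real.sqrt (1 + P) - 1) < rstar ∧
      ∀ r : ℝ, 1 / (Real.sqrt (1 + P) - 1) ≤ r → g r ≤ g rstar := by
  have hL : 0 < Real.log (1 + P) := Real.log_pos (by linarith)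
  have hsL : Real.sqrt (1 + P) = Real.exp (Real.log (1 + P) / 2) := by
    rw [Real.exp_half, Real.exp_log (by linarith)]
  have hs2 : Real.sqrt (1 + P) ^ 2 = 1 + P := Real.sq_sqrt (by linarith)
  have hs1 : 1 < Real.sqrt (1 + P) := by
    rw [Real.lt_sqrt (by norm_num)]; linarith
  have hS2 : Real.sqrt (A ^ 2 + P * Real.log (1 + P)) ^ 2 = A ^ 2 + P * Real.log (1 + P) :=
    Real.sq_sqrt (by positivity)
  have hSA : A < Real.sqrt (A ^ 2 + P * Real.log (1 + P)) := by
    rw [Real.lt_sqrt hA.le]; nlinarith [mul_pos hP hL]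
  set s := Real.sqrt (1 + P) with hs
  set L := Real.log (1 + P) with hLd
  set S := Real.sqrt (A ^ 2 + P * L) with hSd
  have hr0 : 1 / (s - 1) = (A + A * s) / (A * P) := by
    have : s - 1 ≠ 0 := by linarith
    rw [div_eq_div_iff this (by positivity)]
    linear_combination -A * hs2
  have hlt : 1 / (s - 1) < rstar := by
    rw [hr0, hrstar]
    gcongr
  have hgd : ∀ r, HasDerivAt g (A / Real.sqrt (2 * Real.pi) *
      (Real.exp (L / 2 - ((r * s - 1) * A) ^ 2 / 2) - Real.exp (-((r * A) ^ 2) / 2))) r := by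
    intro r
    have hge : g = fun r => gaussQ (r * A) - gaussQ ((r * s - 1) * A) := funext hg
    rw [hge]
    have h1 : HasDerivAt (fun r : ℝ => r * A) (1 * A) r := (hasDerivAt_id r).mul_const A
    have h2 : HasDerivAt (fun r : ℝ => (r * s - 1) * A) ((1 * s) * A) r :=
      (((hasDerivAt_id r).mul_const s).sub_const 1).mul_const A
    have h3 := ((gaussQ_hasDerivAt (r * A)).comp r h1).sub
      ((gaussQ_hasDerivAt ((r * s - 1) * A)).comp r h2)
    refine h3.congr_deriv ?_
    have : L / 2 - ((r * s - 1) * A) ^ 2 / 2 = L / 2 + -(((r * s - 1) * A) ^ 2) / 2 := by ring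
    rw [this, Real.exp_add, ← hsL]
    ring
  have hAPr : A * P * rstar = S + A * s := by
    rw [hrstar]; field_simp
  have key : ∀ r, P * (L - (((r * s - 1) * A) ^ 2 - (r * A) ^ 2)) =
      (A * P * rstar - A * P * r) * (A * P * r + S - A * s) := by
    intro r
    rw [hAPr]
    linear_combination (-1 : ℝ) * hS2 + (A ^ 2 - P * A ^ 2 * r ^ 2) * hs2
  have hfac : ∀ r, 1 / (s - 1) ≤ r → 0 < A * P * r + S - A * s := by
    intro r hr
    rw [hr0, div_le_iff₀ (by positivity)] at hr
    nlinarith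
  have hgc : Continuous g := continuous_iff_continuousAt.2 fun r => (hgd r).continuousAt
  have hAP : 0 < A * P := by positivity
  refine ⟨hlt, fun r hr => ?_⟩
  rcases le_total r rstar with h | h
  · have hm : MonotoneOn g (Set.Icc (1 / (s - 1)) rstar) := by
      refine monotoneOn_of_deriv_nonneg (convex_Icc _ _) hgc.continuousOn
        (fun x _ => (hgd x).differentiableAt.differentiableWithinAt) fun x hx => ?_
      rw [interior_Icc] at hx
      rw [(hgd x).deriv]
      refine mul_nonneg (by positivity) (sub_nonneg.2 (Real.exp_le_exp.2 ?_))
      have h1 := key x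
      have h2 : 0 ≤ (A * P * rstar - A * P * x) * (A * P * x + S - A * s) :=
        mul_nonneg (by nlinarith [hx.2]) (hfac x hx.1.le).le
      rw [← h1] at h2
      have := nonneg_of_mul_nonneg_right h2 hP
      linarith
    exact hm ⟨hr, h⟩ ⟨hlt.le, le_rfl⟩ h
  · have hm : AntitoneOn g (Set.Ici rstar) := by
      refine antitoneOn_of_deriv_nonpos (convex_Ici _) hgc.continuousOn
        (fun x _ => (hgd x).differentiableAt.differentiableWithinAt) fun x hx => ?_
      rw [interior_Ici] at hx
      have hx' : rstar < x := hx
      rw [(hgd x).deriv]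
      refine mul_nonpos_of_nonneg_of_nonpos (by positivity)
        (sub_nonpos.2 (Real.exp_le_exp.2 ?_))
      have h1 := key x
      have h2 : (A * P * rstar - A * P * x) * (A * P * x + S - A * s) ≤ 0 :=
        mul_nonpos_of_nonpos_of_nonneg (by nlinarith) (hfac x (hlt.trans hx').le).le
      rw [← h1] at h2
      have : L - (((x * s - 1) * A) ^ 2 - (x * A) ^ 2) ≤ 0 := by
        by_contra hcon
        push Not at hcon
        linarith [mul_pos hP hcon]
      linarith
    exact hm (Set.mem_Ici.2 le_rfl) h h
end
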